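/- Let n ≥ 1 and let R = ℂ[u_{ij} : 1 ≤ i < j ≤ 2n+1, (i,j) ≠ (1,2)]. Let u be the (2n+1)×(2n+1) skew-symmetric matrix over R with u_{12} = 1 and generic entries u_{ij} elsewhere (u_{ji} = −u_{ij}, u_{ii} = 0). Let M be the (2n−1)×(2n−1) skew-symmetric matrix over R with M_{ij} = u_{i+2,j+2} − (u_{1,i+2}·u_{2,j+2} − u_{1,j+2}·u_{2,i+2}) for 1 ≤ i < j ≤ 2n−1 (so M_{ij} is the Pfaffian of the principal 4×4 submatrix of u on rows and columns 1,2,i+2,j+2). Then for every p with 1 ≤ p ≤ n−1, the ideal of R generated by the Pfaffians of all principal 2(p+1)×2(p+1) submatrices of u equals the ideal of R generated by the Pfaffians of all principal 2p×2p submatrices of M. -/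

import Mathlib

open MvPolynomial

/-- The Pfaffian of a `2k × 2k` matrix `A` over a commutative `ℂ`-algebra:
`Pf(A) = (1/(2^k·k!)) ∑_{σ ∈ S_{2k}} sgn(σ) ∏_{i=1}^k A_{σ(2i−1),σ(2i)}`. -/
noncomputable def pfaffian {R : Type*} [CommRing R] [Algebra ℂ R] {k : ℕ}
    (A : Matrix (Fin (2 * k)) (Fin (2 * k)) R) : R :=
  (((2 : ℂ) ^ k * (Nat.factorial k : ℂ))⁻¹) •
    ∑ σ : Equiv.Perm (Fin (2 * k)),
      (Equiv.Perm.sign σ : ℤ) •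
        ∏ i : Fin k,
          A (σ ⟨2 * i.1, by have := i.2; omega⟩) (σ ⟨2 * i.1 + 1, by have := i.2; omega⟩)

open MvPolynomial

namespace Pfaffian

variable {R : Type*} [CommRing R]

/-- The signed term of the Pfaffian sum attached to a permutation. -/
def term {k : ℕ} (A : Matrix (Fin (2 * k)) (Fin (2 * k)) R)
    (σ : Equiv.Perm (Fin (2 * k))) : R :=
  (Equiv.Perm.sign σ : ℤ) •
    ∏ i : Fin k,
      A (σ ⟨2 * i.1, by have := i.2; omega⟩) (σ ⟨2 * i.1 + 1, by have := i.2; omega⟩)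

/-- Exchanging the first pair of positions with the `i`-th pair. -/
def pairSwap {k : ℕ} (i : Fin (k + 1)) : Equiv.Perm (Fin (2 * (k + 1))) :=
  Equiv.swap ⟨0, by omega⟩ ⟨2 * i.1, by have := i.2; omega⟩ *
    Equiv.swap ⟨1, by omega⟩ ⟨2 * i.1 + 1, by have := i.2; omega⟩

lemma pairSwap_even {k : ℕ} (i l : Fin (k + 1)) :
    pairSwap i ⟨2 * l.1, by have := l.2; omega⟩ =
      ⟨2 * (Equiv.swap 0 i l).1, by have := (Equiv.swap 0 i l).2; omega⟩ := by
  simp only [pairSwap, Equiv.Perm.mul_apply, Equiv.swap_apply_def, Fin.ext_iff]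
  split_ifs <;> simp_all <;> omega

lemma pairSwap_odd {k : ℕ} (i l : Fin (k + 1)) :
    pairSwap i ⟨2 * l.1 + 1, by have := l.2; omega⟩ =
      ⟨2 * (Equiv.swap 0 i l).1 + 1, by have := (Equiv.swap 0 i l).2; omega⟩ := by
  simp only [pairSwap, Equiv.Perm.mul_apply, Equiv.swap_apply_def, Fin.ext_iff]
  split_ifs <;> simp_all <;> omega

lemma sign_pairSwap {k : ℕ} (i : Fin (k + 1)) : Equiv.Perm.sign (pairSwap i) = 1 := by
  rw [pairSwap, Equiv.Perm.sign_mul, Equiv.Perm.sign_swap', Equiv.Perm.sign_swap']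
  by_cases h : i.1 = 0
  · rw [if_pos (by ext; simp only [h]), if_pos (by ext; simp only [h]), mul_one]
  · rw [if_neg (by rw [Fin.ext_iff]; simp only; omega),
      if_neg (by rw [Fin.ext_iff]; simp only; omega), neg_mul_neg, mul_one]

lemma term_mul_pairSwap {k : ℕ} (A : Matrix (Fin (2 * (k + 1))) (Fin (2 * (k + 1))) R)
    (σ : Equiv.Perm (Fin (2 * (k + 1)))) (i : Fin (k + 1)) :
    term A (σ * pairSwap i) = term A σ := by
  unfold term
  rw [Equiv.Perm.sign_mul, sign_pairSwap, mul_one]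
  congr 1
  simp only [Equiv.Perm.mul_apply, pairSwap_even, pairSwap_odd]
  exact Equiv.prod_comp (Equiv.swap 0 i) fun l : Fin (k + 1) =>
    A (σ ⟨2 * l.1, by have := l.2; omega⟩) (σ ⟨2 * l.1 + 1, by have := l.2; omega⟩)

lemma term_mul_swap {k : ℕ} (A : Matrix (Fin (2 * (k + 1))) (Fin (2 * (k + 1))) R)
    (hA : ∀ a b, A a b = -A b a) (σ : Equiv.Perm (Fin (2 * (k + 1)))) :
    term A (σ * Equiv.swap ⟨0, by omega⟩ ⟨1, by omega⟩) = term A σ := by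
  unfold term
  rw [Equiv.Perm.sign_mul, Equiv.Perm.sign_swap (by simp), Fin.prod_univ_succ,
    Fin.prod_univ_succ]
  have h (l : Fin k) (c : ℕ) (hc : 2 * l.succ.1 + c < 2 * (k + 1)) :
      Equiv.swap (⟨0, by omega⟩ : Fin (2 * (k + 1))) ⟨1, by omega⟩ ⟨2 * l.succ.1 + c, hc⟩ =
        ⟨2 * l.succ.1 + c, hc⟩ := by
    apply Equiv.swap_apply_of_ne_of_ne <;> rw [Ne, Fin.ext_iff] <;>
      simp only [Fin.val_succ] <;> omega
  have h0 (l : Fin k) (hc : 2 * l.succ.1 < 2 * (k + 1)) :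
      Equiv.swap (⟨0, by omega⟩ : Fin (2 * (k + 1))) ⟨1, by omega⟩ ⟨2 * l.succ.1, hc⟩ =
        ⟨2 * l.succ.1, hc⟩ := h l 0 hc
  simp only [Equiv.Perm.mul_apply, h, h0]
  simp only [Fin.val_zero, mul_zero, zero_add, Equiv.swap_apply_left, Equiv.swap_apply_right]
  rw [hA (σ ⟨1, _⟩)]
  simp

/-- The terms of the Pfaffian sum can be grouped by the position of the first index, all of
whose positions contribute equally. -/
lemma sum_term_eq {k : ℕ} (A : Matrix (Fin (2 * (k + 1))) (Fin (2 * (k + 1))) R)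
    (hA : ∀ a b, A a b = -A b a) :
    ∑ σ, term A σ =
      (2 * (k + 1)) • ∑ σ : Equiv.Perm (Fin (2 * (k + 1))) with σ ⟨0, by omega⟩ = ⟨0, by omega⟩,
        term A σ := by
  have key (m : Fin (2 * (k + 1))) :
      ∃ ρ : Equiv.Perm (Fin (2 * (k + 1))), ρ ⟨0, by omega⟩ = m ∧
        ∀ σ, term A (σ * ρ) = term A σ := by
    have hm := m.2
    let i : Fin (k + 1) := ⟨m.1 / 2, by omega⟩
    have e0 := pairSwap_even i 0
    have e1 := pairSwap_odd i 0
    simp only [Fin.val_zero, mul_zero, Equiv.swap_apply_left, zero_add] at e0 e1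
    rcases Nat.mod_two_eq_zero_or_one m.1 with h | h
    · refine ⟨pairSwap i, ?_, fun σ => term_mul_pairSwap A σ i⟩
      rw [e0]; ext; simp only [i]; omega
    · refine ⟨pairSwap i * Equiv.swap ⟨0, by omega⟩ ⟨1, by omega⟩, ?_, fun σ => ?_⟩
      · rw [Equiv.Perm.mul_apply, Equiv.swap_apply_left, e1]; ext; simp only [i]; omega
      · rw [← mul_assoc, term_mul_swap A hA, term_mul_pairSwap]
  rw [← Finset.sum_fiberwise (s := Finset.univ)
    (g := fun σ : Equiv.Perm (Fin (2 * (k + 1))) => σ.symm ⟨0, by omega⟩)]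
  rw [Finset.sum_congr rfl (g := fun _ => ∑ σ : Equiv.Perm (Fin (2 * (k + 1)))
    with σ ⟨0, by omega⟩ = ⟨0, by omega⟩, term A σ)]
  · simp
  intro m _
  obtain ⟨ρ, hρ, hinv⟩ := key m
  refine Finset.sum_equiv (Equiv.mulRight ρ) (fun σ => ?_) (fun σ _ => (hinv σ).symm)
  rw [Finset.mem_filter, Finset.mem_filter, Equiv.symm_apply_eq, Equiv.coe_mulRight,
    Equiv.Perm.mul_apply, hρ, eq_comm]
  simp

/-- The sign in the expansion of a Pfaffian along its first row. -/
def expansionSign {n : ℕ} (j : Fin (n + 1)) : ℤˣ := if j = 0 then 1 else -1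

/-- The positions other than `0` and `j + 1`, with `1` put in the place of `j + 1`. -/
def removePair {n : ℕ} (j : Fin (n + 1)) (x : Fin n) : Fin (n + 1 + 1) :=
  (Equiv.swap 0 j x.succ).succ

/-- Expansion of the Pfaffian of a skew matrix along its first row. -/
lemma pfaffian_expand [Algebra ℂ R] {k : ℕ}
    (A : Matrix (Fin (2 * k + 1 + 1)) (Fin (2 * k + 1 + 1)) R)
    (hA : ∀ a b, A a b = -A b a) :
    pfaffian (k := k + 1) A = ∑ j : Fin (2 * k + 1),
      ((expansionSign j : ℤ) • A 0 j.succ) *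
        pfaffian (k := k) (A.submatrix (removePair j) (removePair j)) := by
  have hsum : ∑ σ : Equiv.Perm (Fin (2 * (k + 1))) with σ ⟨0, by omega⟩ = ⟨0, by omega⟩,
      term (k := k + 1) A σ = ∑ j : Fin (2 * k + 1), ((expansionSign j : ℤ) • A 0 j.succ) *
        ∑ σ, term (k := k) (A.submatrix (removePair j) (removePair j)) σ := by
    rw [Finset.sum_filter]
    change ∑ σ : Equiv.Perm (Fin (2 * k + 1 + 1)),
      (if σ 0 = 0 then term (k := k + 1) A σ else 0) = _
    rw [← Equiv.sum_comp Equiv.Perm.decomposeFin.symm, Fintype.sum_prod_type,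
      Finset.sum_eq_single 0 _ (by simp)]
    · rw [← Equiv.sum_comp Equiv.Perm.decomposeFin.symm, Fintype.sum_prod_type]
      refine Finset.sum_congr rfl fun j _ => ?_
      rw [Finset.mul_sum]
      refine Finset.sum_congr rfl fun τ _ => ?_
      rw [if_pos (by simp)]
      have hsign : Equiv.Perm.sign (Equiv.Perm.decomposeFin.symm
          ((0 : Fin (2 * k + 1 + 1)), Equiv.Perm.decomposeFin.symm (j, τ))) =
            expansionSign j * Equiv.Perm.sign τ := by
        rw [Equiv.Perm.decomposeFin.symm_sign, Equiv.Perm.decomposeFin.symm_sign, if_pos rfl,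
          one_mul, expansionSign]
      have hzero : Equiv.Perm.decomposeFin.symm
          ((0 : Fin (2 * k + 1 + 1)), Equiv.Perm.decomposeFin.symm (j, τ)) 0 = 0 := by simp
      have hone : Equiv.Perm.decomposeFin.symm
          ((0 : Fin (2 * k + 1 + 1)), Equiv.Perm.decomposeFin.symm (j, τ))
            (Fin.succ 0) = j.succ := by simp
      have hsucc (x : Fin (2 * k)) : Equiv.Perm.decomposeFin.symm
          ((0 : Fin (2 * k + 1 + 1)), Equiv.Perm.decomposeFin.symm (j, τ)) x.succ.succ =
            removePair j (τ x) := by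
        rw [Equiv.Perm.decomposeFin_symm_apply_succ, Equiv.Perm.decomposeFin_symm_apply_succ]
        simp [removePair]
      unfold term
      rw [Fin.prod_univ_succ, smul_mul_smul_comm]
      refine congrArg₂ _ ?_ (congrArg₂ _ (congrArg₂ A hzero hone)
        (Finset.prod_congr rfl fun l _ => congrArg₂ A (hsucc ⟨2 * l.1, ?_⟩)
          (hsucc ⟨2 * l.1 + 1, ?_⟩)))
      · exact (congrArg Units.val hsign).trans (Units.val_mul _ _)
      all_goals
        have := l.2
        omega
    · intro b _ hb
      simp [hb]
  have hc : (((2 : ℂ) ^ (k + 1) * (Nat.factorial (k + 1) : ℂ))⁻¹) * (2 * (k + 1) : ℕ) =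
      (((2 : ℂ) ^ k * (Nat.factorial k : ℂ))⁻¹) := by
    have h1 : (Nat.factorial k : ℂ) ≠ 0 := by exact_mod_cast Nat.factorial_ne_zero k
    have h2 : (k : ℂ) + 1 ≠ 0 := by exact_mod_cast Nat.succ_ne_zero k
    rw [Nat.factorial_succ]
    push_cast
    field_simp
    ring
  change (((2 : ℂ) ^ (k + 1) * (Nat.factorial (k + 1) : ℂ))⁻¹) •
    ∑ σ, term (k := k + 1) A σ = _
  rw [sum_term_eq (k := k) A hA, hsum, ← Nat.cast_smul_eq_nsmul ℂ, smul_smul, hc,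
    Finset.smul_sum]
  refine Finset.sum_congr rfl fun j _ => ?_
  rw [← mul_smul_comm]
  rfl

section AlternatingForm

variable {V : Type*} [AddCommGroup V] [Module R V]

/-- The product of the values of a bilinear form on consecutive pairs is linear in each vector. -/
lemma exists_pairProd_update (B : LinearMap.BilinForm R V) {k : ℕ} [DecidableEq (Fin (2 * k))]
    (v : Fin (2 * k) → V) (m : Fin (2 * k)) :
    ∃ g : V →ₗ[R] R, ∀ x, ∏ i : Fin k,
      B (Function.update v m x ⟨2 * i.1, by have := i.2; omega⟩)
        (Function.update v m x ⟨2 * i.1 + 1, by have := i.2; omega⟩) = g x := by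
  have hm := m.2
  let i : Fin k := ⟨m.1 / 2, by omega⟩
  let c : R := ∏ l ∈ Finset.univ.erase i,
    B (v ⟨2 * l.1, by have := l.2; omega⟩) (v ⟨2 * l.1 + 1, by have := l.2; omega⟩)
  have hc (x : V) : ∏ l : Fin k,
      B (Function.update v m x ⟨2 * l.1, by have := l.2; omega⟩)
        (Function.update v m x ⟨2 * l.1 + 1, by have := l.2; omega⟩) =
      c * B (Function.update v m x ⟨2 * i.1, by have := i.2; omega⟩)
        (Function.update v m x ⟨2 * i.1 + 1, by have := i.2; omega⟩) := by
    rw [← Finset.prod_erase_mul _ _ (Finset.mem_univ i)]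
    congr 1
    refine Finset.prod_congr rfl fun l hl => ?_
    have hl' : l.1 ≠ m.1 / 2 := fun h => Finset.ne_of_mem_erase hl (Fin.ext h)
    rw [Function.update_of_ne (by rw [Ne, Fin.ext_iff]; simp only; omega),
      Function.update_of_ne (by rw [Ne, Fin.ext_iff]; simp only; omega)]
  simp only [hc]
  rcases Nat.mod_two_eq_zero_or_one m.1 with h | h
  · have h0 : (⟨2 * i.1, by have := i.2; omega⟩ : Fin (2 * k)) = m := by
      ext; simp only [i]; omega
    have h1 : (⟨2 * i.1 + 1, by have := i.2; omega⟩ : Fin (2 * k)) ≠ m := by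
      rw [Ne, Fin.ext_iff]; simp only [i]; omega
    refine ⟨c • B.flip (v ⟨2 * i.1 + 1, by have := i.2; omega⟩), fun x => ?_⟩
    rw [h0, Function.update_self, Function.update_of_ne h1]
    rfl
  · have h0 : (⟨2 * i.1 + 1, by have := i.2; omega⟩ : Fin (2 * k)) = m := by
      ext; simp only [i]; omega
    have h1 : (⟨2 * i.1, by have := i.2; omega⟩ : Fin (2 * k)) ≠ m := by
      rw [Ne, Fin.ext_iff]; simp only [i]; omega
    refine ⟨c • B (v ⟨2 * i.1, by have := i.2; omega⟩), fun x => ?_⟩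
    rw [h0, Function.update_self, Function.update_of_ne h1]
    rfl

/-- The product of the values of a bilinear form on consecutive pairs of vectors. -/
def pairProd (B : LinearMap.BilinForm R V) (k : ℕ) :
    MultilinearMap R (fun _ : Fin (2 * k) => V) R where
  toFun v := ∏ i : Fin k,
    B (v ⟨2 * i.1, by have := i.2; omega⟩) (v ⟨2 * i.1 + 1, by have := i.2; omega⟩)
  map_update_add' v m x y := by
    obtain ⟨g, hg⟩ := exists_pairProd_update B v m
    simp only [hg, map_add]
  map_update_smul' v m c x := by
    obtain ⟨g, hg⟩ := exists_pairProd_update B v m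
    simp only [hg, map_smul]

/-- The Pfaffian of the Gram matrix of a bilinear form, as an alternating map. -/
noncomputable def pfaffianForm [Algebra ℂ R] (B : LinearMap.BilinForm R V) (k : ℕ) :
    V [⋀^Fin (2 * k)]→ₗ[R] R :=
  algebraMap ℂ R (((2 : ℂ) ^ k * (Nat.factorial k : ℂ))⁻¹) •
    MultilinearMap.alternatization (pairProd B k)

lemma pfaffianForm_apply [Algebra ℂ R] (B : LinearMap.BilinForm R V) (k : ℕ)
    (v : Fin (2 * k) → V) :
    pfaffianForm B k v = pfaffian (Matrix.of fun a b => B (v a) (v b)) := by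
  rw [pfaffianForm, AlternatingMap.smul_apply, MultilinearMap.alternatization_apply,
    algebraMap_smul]
  rfl

lemma pfaffianForm_expand [Algebra ℂ R] (B : LinearMap.BilinForm R V)
    (hB : ∀ x y, B x y = -B y x) (k : ℕ) (v : Fin (2 * k + 1 + 1) → V) :
    pfaffianForm B (k + 1) v = ∑ j : Fin (2 * k + 1),
      ((expansionSign j : ℤ) • B (v 0) (v j.succ)) * pfaffianForm B k (v ∘ removePair j) := by
  rw [pfaffianForm_apply]
  refine (pfaffian_expand _ fun a b => hB _ _).trans ?_
  simp only [pfaffianForm_apply]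
  rfl

/-- An alternating map evaluated on members of a finite family lies in the ideal generated by its
values on increasing subfamilies. -/
lemma alternatingMap_comp_mem_span {m N : ℕ} (F : V [⋀^Fin m]→ₗ[R] R) (b : Fin N → V)
    (r : Fin m → Fin N) :
    F (b ∘ r) ∈ Ideal.span {x | ∃ s : Finset (Fin N), ∃ h : s.card = m,
      x = F fun a => b (s.orderIsoOfFin h a)} := by
  by_cases hr : Function.Injective r
  · have hcard : (Finset.univ.image r).card = m := by
      rw [Finset.card_image_of_injective _ hr, Finset.card_fin]
    let f : Fin m → Finset.univ.image r := fun a => ⟨r a, by simp⟩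
    have hf : Function.Bijective f := by
      refine ⟨fun a c h => hr (congrArg Subtype.val h), fun ⟨y, hy⟩ => ?_⟩
      obtain ⟨a, -, rfl⟩ := Finset.mem_image.1 hy
      exact ⟨a, rfl⟩
    let σ : Equiv.Perm (Fin m) := (Equiv.ofBijective f hf).trans
      ((Finset.univ.image r).orderIsoOfFin hcard).toEquiv.symm
    have hσ : b ∘ r =
        (fun a => b ((Finset.univ.image r).orderIsoOfFin hcard a)) ∘ σ := by
      ext a
      change b (f a) = b (((Finset.univ.image r).orderIsoOfFin hcard)
        (((Finset.univ.image r).orderIsoOfFin hcard).symm (f a)))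
      rw [OrderIso.apply_symm_apply]
    rw [hσ, F.map_perm, Units.smul_def, zsmul_eq_mul]
    exact Ideal.mul_mem_left _ _ (Ideal.subset_span ⟨_, hcard, rfl⟩)
  · rw [F.map_eq_zero_of_not_injective _ fun h => hr h.of_comp]
    exact Ideal.zero_mem _

/-- An alternating map takes values in the ideal generated by its values on increasing subfamilies
of a finite spanning family. -/
lemma alternatingMap_mem_span {m N : ℕ} (F : V [⋀^Fin m]→ₗ[R] R) (b : Fin N → V)
    (hb : Submodule.span R (Set.range b) = ⊤) (v : Fin m → V) :
    F v ∈ Ideal.span {x | ∃ s : Finset (Fin N), ∃ h : s.card = m,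
      x = F fun a => b (s.orderIsoOfFin h a)} := by
  have hv (a : Fin m) : ∃ c : Fin N → R, ∑ i, c i • b i = v a :=
    (Submodule.mem_span_range_iff_exists_fun R).1 (hb ▸ Submodule.mem_top)
  choose c hc using hv
  have hvc : v = fun a => ∑ i, c a i • b i := funext fun a => (hc a).symm
  rw [hvc, ← AlternatingMap.coe_multilinearMap, MultilinearMap.map_sum]
  refine Ideal.sum_mem _ fun r _ => ?_
  rw [MultilinearMap.map_smul_univ, smul_eq_mul]
  exact Ideal.mul_mem_left _ _ (alternatingMap_comp_mem_span F b r)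

lemma removePair_ne_zero {n : ℕ} (j : Fin (n + 1)) (x : Fin n) : removePair j x ≠ 0 :=
  Fin.succ_ne_zero _

lemma removePair_ne_succ {n : ℕ} (j : Fin (n + 1)) (x : Fin n) : removePair j x ≠ j.succ := by
  intro h
  have h' := Fin.succ_injective _ h
  rw [Equiv.swap_apply_eq_iff, Equiv.swap_apply_right] at h'
  exact Fin.succ_ne_zero _ h'

/-- If a skew bilinear form splits off a hyperbolic plane spanned by the first two members of a
spanning family, then its Pfaffians of size `2 (p + 1)` generate the same ideal as the Pfaffians
of size `2 p` of the remaining members. -/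
lemma span_pfaffianForm_eq [Algebra ℂ R] (B : LinearMap.BilinForm R V)
    (hB : ∀ x y, B x y = -B y x) {N K : ℕ} (hN : N = K + 2) (b b' : Fin N → V)
    (hb : Submodule.span R (Set.range b) = ⊤) (hb' : Submodule.span R (Set.range b') = ⊤)
    (i₀ i₁ : Fin N) (hi₀ : i₀.1 = 0) (hi₁ : i₁.1 = 1) (h01 : B (b i₀) (b i₁) = 1)
    (h0 : ∀ i, i ≠ i₁ → B (b i₀) (b i) = 0)
    (e : Fin K → Fin N) (he : ∀ a, (e a).1 = a.1 + 2) (p : ℕ) :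
    Ideal.span {x | ∃ s : Finset (Fin N), ∃ h : s.card = 2 * (p + 1),
        x = pfaffianForm B (p + 1) fun a => b' (s.orderIsoOfFin h a)} =
      Ideal.span {x | ∃ s : Finset (Fin K), ∃ h : s.card = 2 * p,
        x = pfaffianForm B p fun a => b (e (s.orderIsoOfFin h a))} := by
  apply le_antisymm
  · have hle : Ideal.span {x | ∃ s : Finset (Fin N), ∃ h : s.card = 2 * (p + 1),
        x = pfaffianForm B (p + 1) fun a => b (s.orderIsoOfFin h a)} ≤
      Ideal.span {x | ∃ s : Finset (Fin K), ∃ h : s.card = 2 * p,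
        x = pfaffianForm B p fun a => b (e (s.orderIsoOfFin h a))} := by
      rw [Ideal.span_le]
      rintro _ ⟨s, h, rfl⟩
      let w : Fin (2 * p + 1 + 1) ↪o Fin N := s.orderEmbOfFin h
      change pfaffianForm B (p + 1) (b ∘ w) ∈ _
      rw [pfaffianForm_expand B hB]
      refine Ideal.sum_mem _ fun j _ => ?_
      by_cases hw : ∀ x, 2 ≤ (w (removePair j x)).1
      · let r : Fin (2 * p) → Fin K := fun x =>
          ⟨(w (removePair j x)).1 - 2, by have := (w (removePair j x)).2; have := hw x; omega⟩
        have hr : (b ∘ w) ∘ removePair j = (b ∘ e) ∘ r := by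
          ext x
          simp only [Function.comp_apply]
          congr 1
          ext
          rw [he]
          have := hw x
          simp only [r]
          omega
        rw [hr]
        exact Ideal.mul_mem_left _ _ (alternatingMap_comp_mem_span _ (b ∘ e) r)
      · push Not at hw
        obtain ⟨x, hx⟩ := hw
        have hlt : w 0 < w (removePair j x) :=
          w.strictMono (Fin.pos_of_ne_zero (removePair_ne_zero j x))
        have hlt' : (w 0).1 < (w (removePair j x)).1 := hlt
        have hw0 : w 0 = i₀ := by ext; omega
        have hw1 : w (removePair j x) = i₁ := by ext; omega
        have hj : w j.succ ≠ i₁ := fun hj =>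
          removePair_ne_succ j x (w.injective (hw1.trans hj.symm))
        have hz : B ((b ∘ w) 0) ((b ∘ w) j.succ) = 0 := by
          simp only [Function.comp_apply]
          rw [hw0, h0 _ hj]
        rw [hz, smul_zero, zero_mul]
        exact Ideal.zero_mem _
    rw [Ideal.span_le]
    rintro _ ⟨s, h, rfl⟩
    exact hle (alternatingMap_mem_span _ b hb _)
  · rw [Ideal.span_le]
    rintro _ ⟨s, h, rfl⟩
    let w : Fin (2 * p) ↪o Fin K := s.orderEmbOfFin h
    let v : Fin (2 * p + 1 + 1) → V := Fin.cons (b i₀) (Fin.cons (b i₁) (b ∘ e ∘ w))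
    have hv : pfaffianForm B (p + 1) v = pfaffianForm B p (b ∘ e ∘ w) := by
      rw [pfaffianForm_expand B hB, Finset.sum_eq_single 0 _ (by simp)]
      · have hr : v ∘ removePair 0 = b ∘ e ∘ w := by
          ext x
          simp [v, removePair]
        rw [hr]
        simp [v, expansionSign, h01]
      · intro j _ hj
        obtain ⟨l, rfl⟩ := Fin.exists_succ_eq.2 hj
        have hl : e (w l) ≠ i₁ := by
          intro hl
          have := he (w l)
          rw [hl] at this
          omega
        have hz : B (v 0) (v l.succ.succ) = 0 := by
          simp only [v, Fin.cons_zero, Fin.cons_succ, Function.comp_apply]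
          exact h0 _ hl
        rw [hz, smul_zero, zero_mul]
    change pfaffianForm B p (b ∘ e ∘ w) ∈ _
    rw [← hv]
    exact alternatingMap_mem_span _ b' hb' v

end AlternatingForm

/-- For a skew matrix `A` whose entry at `(0, 1)` is `1`, the Pfaffians of size `2 (p + 1)` generate
the same ideal as the Pfaffians of size `2 p` of the Schur complement of the leading `2 × 2` block
of `A`. -/
lemma span_pfaffian_eq_span_pfaffian_schur [Algebra ℂ R] {N K : ℕ} (hN : N = K + 2)
    (A : Matrix (Fin N) (Fin N) R) (hA : ∀ i j, A i j = -A j i) (hA0 : ∀ i, A i i = 0)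
    (i₀ i₁ : Fin N) (hi₀ : i₀.1 = 0) (hi₁ : i₁.1 = 1) (h01 : A i₀ i₁ = 1)
    (e : Fin K → Fin N) (he : ∀ a, (e a).1 = a.1 + 2) (p : ℕ) :
    Ideal.span {x | ∃ s : Finset (Fin N), ∃ h : s.card = 2 * (p + 1),
        x = pfaffian (A.submatrix (fun a => (s.orderIsoOfFin h a : Fin N))
          (fun a => (s.orderIsoOfFin h a : Fin N)))} =
      Ideal.span {x | ∃ s : Finset (Fin K), ∃ h : s.card = 2 * p,
        x = pfaffian ((Matrix.of fun a b : Fin K =>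
          A (e a) (e b) - (A i₀ (e a) * A i₁ (e b) - A i₀ (e b) * A i₁ (e a))).submatrix
            (fun a => (s.orderIsoOfFin h a : Fin K))
            (fun a => (s.orderIsoOfFin h a : Fin K)))} := by
  let B := Matrix.toBilin' A
  let b' : Fin N → Fin N → R := fun i => Pi.single i 1
  let b : Fin N → Fin N → R := fun i =>
    if i = i₀ ∨ i = i₁ then b' i else b' i + A i₁ i • b' i₀ - A i₀ i • b' i₁
  have hBb (i j : Fin N) : B (b' i) (b' j) = A i j := Matrix.toBilin'_single A i j
  have hB (x y : Fin N → R) : B x y = -B y x := by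
    simp only [B, Matrix.toBilin'_apply]
    rw [Finset.sum_comm, ← Finset.sum_neg_distrib]
    refine Finset.sum_congr rfl fun i _ => ?_
    rw [← Finset.sum_neg_distrib]
    refine Finset.sum_congr rfl fun j _ => ?_
    rw [hA j i]
    ring
  have hb' : Submodule.span R (Set.range b') = ⊤ := by
    have := (Pi.basisFun R (Fin N)).span_eq
    rwa [show ⇑(Pi.basisFun R (Fin N)) = b' from funext fun i => Pi.basisFun_apply R _ i] at this
  have hb0 : b i₀ = b' i₀ := if_pos (Or.inl rfl)
  have hb1 : b i₁ = b' i₁ := if_pos (Or.inr rfl)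
  have hb2 (i : Fin N) (h0 : i ≠ i₀) (h1 : i ≠ i₁) :
      b i = b' i + A i₁ i • b' i₀ - A i₀ i • b' i₁ := if_neg (by simp [h0, h1])
  have hb : Submodule.span R (Set.range b) = ⊤ := by
    rw [eq_top_iff, ← hb', Submodule.span_le]
    rintro _ ⟨i, rfl⟩
    have hmem (i : Fin N) : b i ∈ Submodule.span R (Set.range b) :=
      Submodule.subset_span ⟨i, rfl⟩
    rw [SetLike.mem_coe]
    by_cases h0 : i = i₀
    · rw [h0, ← hb0]; exact hmem _
    by_cases h1 : i = i₁
    · rw [h1, ← hb1]; exact hmem _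
    have h : b' i = b i - A i₁ i • b i₀ + A i₀ i • b i₁ := by
      rw [hb2 i h0 h1, hb0, hb1]; abel
    rw [h]
    exact add_mem (sub_mem (hmem _) (Submodule.smul_mem _ _ (hmem _)))
      (Submodule.smul_mem _ _ (hmem _))
  have h10 : A i₁ i₀ = -1 := by rw [hA, h01]
  have he0 (a : Fin K) : e a ≠ i₀ := fun h => by have := he a; rw [h] at this; omega
  have he1 (a : Fin K) : e a ≠ i₁ := fun h => by have := he a; rw [h] at this; omega
  have key := span_pfaffianForm_eq B hB hN b b' hb hb' i₀ i₁ hi₀ hi₁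
    (by rw [hb0, hb1, hBb, h01]) (fun i hi => ?_) e he p
  · simp only [pfaffianForm_apply, hBb] at key
    have hM (a c : Fin K) : B (b (e a)) (b (e c)) =
        A (e a) (e c) - (A i₀ (e a) * A i₁ (e c) - A i₀ (e c) * A i₁ (e a)) := by
      rw [hb2 _ (he0 a) (he1 a), hb2 _ (he0 c) (he1 c)]
      simp only [map_add, map_sub, map_smul, LinearMap.add_apply, LinearMap.sub_apply,
        LinearMap.smul_apply, hBb, smul_eq_mul, hA0, h01, h10, hA (e a) i₀, hA (e a) i₁]
      ring
    simp only [hM] at key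
    exact key
  · by_cases h0 : i = i₀
    · rw [h0, hb0, hBb, hA0]
    rw [hb0, hb2 i h0 hi]
    simp only [map_add, map_sub, map_smul, hBb, smul_eq_mul, hA0, h01]
    ring

end Pfaffian

/-- Let `u` be the generic `(2n+1) × (2n+1)` skew-symmetric matrix with `u₁₂ = 1`
over `R = ℂ[u_{ij} : 1 ≤ i < j ≤ 2n+1, (i,j) ≠ (1,2)]`, and let `M` be the
`(2n−1) × (2n−1)` skew-symmetric matrix with
`M_{ij} = u_{i+2,j+2} − (u_{1,i+2}·u_{2,j+2} − u_{1,j+2}·u_{2,i+2})`. Then for every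
`1 ≤ p ≤ n−1`, the ideal generated by the Pfaffians of all principal
`2(p+1) × 2(p+1)` submatrices of `u` equals the ideal generated by the Pfaffians
of all principal `2p × 2p` submatrices of `M`. -/
theorem pfaffian_ideal_localization (n : ℕ) (hn : 1 ≤ n) (p : ℕ)
    (hp1 : 1 ≤ p) (hpn : p ≤ n - 1) :
    let u : Matrix (Fin (2 * n + 1)) (Fin (2 * n + 1))
        (MvPolynomial {q : Fin (2 * n + 1) × Fin (2 * n + 1) //
          q.1 < q.2 ∧ q ≠ ((0 : Fin (2 * n + 1)), (1 : Fin (2 * n + 1)))} ℂ) :=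
      Matrix.of fun i j =>
        if h : i < j then
          (if h2 : (i, j) = ((0 : Fin (2 * n + 1)), (1 : Fin (2 * n + 1))) then 1
           else X ⟨(i, j), ⟨h, h2⟩⟩)
        else if h' : j < i then
          (if h2 : (j, i) = ((0 : Fin (2 * n + 1)), (1 : Fin (2 * n + 1))) then -1
           else -X ⟨(j, i), ⟨h', h2⟩⟩)
        else 0
    let e : Fin (2 * n - 1) → Fin (2 * n + 1) := fun a => ⟨a.1 + 2, by have := a.2; omega⟩
    let M := Matrix.of fun a b : Fin (2 * n - 1) =>
      u (e a) (e b) - (u 0 (e a) * u 1 (e b) - u 0 (e b) * u 1 (e a))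
    Ideal.span {x | ∃ s : Finset (Fin (2 * n + 1)), ∃ h : s.card = 2 * (p + 1),
        x = pfaffian (u.submatrix
          (fun a => (s.orderIsoOfFin h a : Fin (2 * n + 1)))
          (fun a => (s.orderIsoOfFin h a : Fin (2 * n + 1))))}
      = Ideal.span {x | ∃ s : Finset (Fin (2 * n - 1)), ∃ h : s.card = 2 * p,
          x = pfaffian (M.submatrix
            (fun a => (s.orderIsoOfFin h a : Fin (2 * n - 1)))
            (fun a => (s.orderIsoOfFin h a : Fin (2 * n - 1))))} := by
  intro u e M
  refine Pfaffian.span_pfaffian_eq_span_pfaffian_schur (by omega) u (fun i j => ?_)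
    (fun i => ?_) 0 1 rfl ?_ ?_ e (fun a => rfl) p
  · simp only [u, Matrix.of_apply]
    rcases lt_trichotomy i j with h | h | h
    · rw [dif_pos h, dif_neg h.asymm, dif_pos h]
      split_ifs <;> simp
    · subst h
      simp
    · rw [dif_neg h.asymm, dif_pos h, dif_pos h]
      split_ifs <;> simp
  · simp [u]
  · rw [Fin.val_one', Nat.mod_eq_of_lt (by omega)]
  · have h : (0 : Fin (2 * n + 1)) < 1 := by
      rw [Fin.lt_def, Fin.val_one', Nat.mod_eq_of_lt (by omega)]
      simp
    simp only [u, Matrix.of_apply]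
    rw [dif_pos h, dif_pos trivial]
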